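/- Suppose f(0) ≠ 0. For each proper cluster s ∈ Σ_f let λ_s = min_{r∈s} v(r). Then f is NP-regular if and only if every proper cluster s ∈ Σ_f with |s| > |λ_s|_p satisfies d_s = λ_s. -/

import Mathlib

open Polynomial
open scoped Classical

namespace ClusterPicture

variable {K Kbar : Type*} [Field K] [Field Kbar] [Algebra K Kbar]

lemma zero_lt_top' : (0 : WithTop ℚ) < ⊤ := by
  simp

lemma withTop_add_pos {a b : WithTop ℚ} (ha : 0 ≤ a) (hb : 0 < b) : 0 < a + b := by
  rcases eq_or_ne a ⊤ with h | h
  · subst h; rw [top_add]; exact zero_lt_top'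
  · lift a to ℚ using h
    rcases eq_or_ne b ⊤ with h' | h'
    · subst h'; rw [add_top]; exact zero_lt_top'
    · lift b to ℚ using h'
      have ha' : (0 : ℚ) ≤ a := by exact_mod_cast ha
      have hb' : (0 : ℚ) < b := by exact_mod_cast hb
      exact_mod_cast add_pos_of_nonneg_of_pos ha' hb'

/-- The setting of the paper: `K` is a complete discretely valued field, with valuation `v`
normalised so that `v(K^×) = ℤ`, `Kbar` is an algebraic closure of `K`, and `v` is (the unique)
extension of the valuation to a `ℚ ∪ {∞}`-valued valuation on `Kbar`. -/
structure Setup (K Kbar : Type*) [Field K] [Field Kbar] [Algebra K Kbar] : Type _ where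
  /-- the valuation on the algebraic closure -/
  v : Kbar → WithTop ℚ
  v_top_iff : ∀ x : Kbar, v x = ⊤ ↔ x = 0
  v_one : v 1 = 0
  v_neg : ∀ x : Kbar, v (-x) = v x
  v_mul : ∀ x y : Kbar, v (x * y) = v x + v y
  v_add : ∀ x y : Kbar, min (v x) (v y) ≤ v (x + y)
  /-- the valuation is normalised: nonzero elements of `K` have integer valuation -/
  v_base_int : ∀ x : K, x ≠ 0 → ∃ n : ℤ, v (algebraMap K Kbar x) = ((n : ℚ) : WithTop ℚ)
  /-- the valuation is surjective onto `ℤ` on `K^×`: there is a uniformiser -/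
  exists_uniformiser : ∃ π : K, v (algebraMap K Kbar π) = ((1 : ℚ) : WithTop ℚ)
  /-- `Kbar` is an algebraic closure of `K` -/
  algClosed : IsAlgClosed Kbar
  algebraic : Algebra.IsAlgebraic K Kbar
  /-- `K` is complete with respect to the valuation -/
  complete : ∀ a : ℕ → K,
    (∀ q : ℚ, ∃ N : ℕ, ∀ m, N ≤ m → ∀ n, N ≤ n →
      ((q : ℚ) : WithTop ℚ) ≤ v (algebraMap K Kbar (a m - a n))) →
    ∃ b : K, ∀ q : ℚ, ∃ N : ℕ, ∀ n, N ≤ n →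
      ((q : ℚ) : WithTop ℚ) ≤ v (algebraMap K Kbar (a n - b))

/-- Valuation of an element of the base field `K`. -/
def Setup.vK (S : Setup K Kbar) (x : K) : WithTop ℚ := S.v (algebraMap K Kbar x)

/-- The finite set of roots of `f` in the algebraic closure `Kbar`. -/
noncomputable def rootFinset (f : K[X]) : Finset Kbar :=
  (f.map (algebraMap K Kbar)).roots.toFinset

/-- A cluster for `f`: a nonempty subset of the set of roots of `f` cut out by a `v`-adic disc. -/
def IsCluster (S : Setup K Kbar) (f : K[X]) (s : Finset Kbar) : Prop :=
  s.Nonempty ∧ ∃ (z : Kbar) (δ : ℚ),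
    s = (rootFinset f).filter fun r => ((δ : ℚ) : WithTop ℚ) ≤ S.v (r - z)

/-- The depth `d_s = min_{r,r' ∈ s} v (r - r')` of a cluster. -/
noncomputable def depth (S : Setup K Kbar) (s : Finset Kbar) : WithTop ℚ :=
  s.inf fun r => s.inf fun r' => S.v (r - r')

/-- `min_{r ∈ s} v (r - z)`, for `z ∈ Kbar`. -/
noncomputable def dmin (S : Setup K Kbar) (s : Finset Kbar) (z : Kbar) : WithTop ℚ :=
  s.inf fun r => S.v (r - z)

/-- `min_{r ∈ s} v (r - w)`, for `w ∈ K`. -/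
noncomputable def dminK (S : Setup K Kbar) (s : Finset Kbar) (w : K) : WithTop ℚ :=
  dmin S s (algebraMap K Kbar w)

/-- `w ∈ K` is a rational centre of `s` if it maximises `min_{r ∈ s} v (r - w)`.
For a proper cluster `s` with rational centre `w`, the radius `ρ_s` is `dminK S s w`. -/
def IsRationalCentre (S : Setup K Kbar) (s : Finset Kbar) (w : K) : Prop :=
  ∀ w' : K, dminK S s w' ≤ dminK S s w

/-- A rational cluster: a cluster cut out by a disc with centre in `K`. -/
def IsRationalCluster (S : Setup K Kbar) (f : K[X]) (s : Finset Kbar) : Prop :=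
  s.Nonempty ∧ ∃ (w : K) (δ : ℚ),
    s = (rootFinset f).filter fun r => ((δ : ℚ) : WithTop ℚ) ≤ S.v (r - algebraMap K Kbar w)

/-- A cluster centred at `w ∈ K`. -/
def IsClusterCentredAt (S : Setup K Kbar) (f : K[X]) (w : K) (s : Finset Kbar) : Prop :=
  s.Nonempty ∧ ∃ δ : ℚ,
    s = (rootFinset f).filter fun r => ((δ : ℚ) : WithTop ℚ) ≤ S.v (r - algebraMap K Kbar w)

/-- The cluster picture of `f` is almost rational: every proper cluster `s` with
`|s| > |ρ_s|_p` satisfies `d_s = ρ_s`. -/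
def AlmostRational (S : Setup K Kbar) (f : K[X]) (p : ℕ) : Prop :=
  ∀ s : Finset Kbar, IsCluster S f s → 1 < s.card →
    ∀ (w : K) (ρ : ℚ), IsRationalCentre S s w → dminK S s w = ((ρ : ℚ) : WithTop ℚ) →
      padicNorm p ρ < (s.card : ℚ) → depth S s = ((ρ : ℚ) : WithTop ℚ)

/-- The slope of the `j`-th edge of the polygon with vertices `(i_j, c_j)`. -/
def NPslope {s : ℕ} (i : Fin (s + 1) → ℕ) (c : Fin (s + 1) → ℚ) (j : Fin s) : ℚ :=
  (c j.succ - c j.castSucc) / ((i j.succ : ℚ) - (i j.castSucc : ℚ))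

/-- `(i_0, c_0), …, (i_s, c_s)` are the vertices of the Newton polygon of `f`:
the points `(i_j, c_j)` are among the points `(m, v(a_m))`, the first and last vertices lie
above the trailing and leading coefficients, the slopes of consecutive edges strictly
increase, and every point `(m, v(a_m))` lies on or above (the line spanned by) every edge. -/
structure IsNPVertices (S : Setup K Kbar) (f : K[X]) (s : ℕ)
    (i : Fin (s + 1) → ℕ) (c : Fin (s + 1) → ℚ) : Prop where
  mono : StrictMono i
  first : i 0 = f.natTrailingDegree
  last : i (Fin.last s) = f.natDegree
  vert : ∀ j, S.vK (f.coeff (i j)) = ((c j : ℚ) : WithTop ℚ)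
  slope_mono : StrictMono (NPslope i c)
  support : ∀ (j : Fin s) (m : ℕ) (q : ℚ), S.vK (f.coeff m) = ((q : ℚ) : WithTop ℚ) →
    (c j.succ - c j.castSucc) * ((m : ℚ) - (i j.castSucc : ℚ)) ≤
      (q - c j.castSucc) * ((i j.succ : ℚ) - (i j.castSucc : ℚ))

/-- The valuation ring of `Kbar`. -/
def intRing (S : Setup K Kbar) : Subring Kbar where
  carrier := {x : Kbar | (0 : WithTop ℚ) ≤ S.v x}
  zero_mem' := by
    simp only [Set.mem_setOf_eq, (S.v_top_iff 0).mpr rfl]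
    exact le_top
  one_mem' := by
    simp only [Set.mem_setOf_eq, S.v_one]
    exact le_refl _
  add_mem' := by
    intro a b ha hb
    exact le_trans (le_min ha hb) (S.v_add a b)
  mul_mem' := by
    intro a b ha hb
    simp only [Set.mem_setOf_eq, S.v_mul a b]
    exact add_nonneg ha hb
  neg_mem' := by
    intro a ha
    simpa only [Set.mem_setOf_eq, S.v_neg] using ha

lemma mem_intRing {S : Setup K Kbar} {x : Kbar} :
    x ∈ intRing S ↔ (0 : WithTop ℚ) ≤ S.v x := Iff.rfl

/-- The maximal ideal of the valuation ring of `Kbar`. -/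
def maxIdeal (S : Setup K Kbar) : Ideal (intRing S) where
  carrier := {x : intRing S | (0 : WithTop ℚ) < S.v (x : Kbar)}
  zero_mem' := by
    show (0 : WithTop ℚ) < S.v ((0 : intRing S) : Kbar)
    rw [show ((0 : intRing S) : Kbar) = 0 from rfl, (S.v_top_iff 0).mpr rfl]
    exact zero_lt_top'
  add_mem' := by
    intro a b ha hb
    show (0 : WithTop ℚ) < S.v ((a : Kbar) + (b : Kbar))
    exact lt_of_lt_of_le (lt_min ha hb) (S.v_add _ _)
  smul_mem' := by
    intro c x hx
    show (0 : WithTop ℚ) < S.v ((c : Kbar) * (x : Kbar))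
    rw [S.v_mul]
    exact withTop_add_pos c.2 hx

/-- The residue field of `Kbar`; it is an algebraic closure of the residue field `k` of `K`. -/
abbrev Residue (S : Setup K Kbar) : Type _ := intRing S ⧸ maxIdeal S

/-- Reduction to the residue field (with junk value `0` on non-integral elements). -/
noncomputable def red (S : Setup K Kbar) (x : Kbar) : Residue S :=
  if h : (0 : WithTop ℚ) ≤ S.v x then Ideal.Quotient.mk (maxIdeal S) ⟨x, mem_intRing.mpr h⟩
  else 0

/-- The reduction `f̄|_L` of `f` along the edge `L` of its Newton polygon with endpoints
`(i₁, q₁)` and `(i₂, q₂)`, of slope `ρ = nρ / n` where `n` is the denominator of `ρ`;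
`π` is a uniformiser of `K`.  This is the reduction of `π^{-q₁}·(f|_L)(π^{-nρ}·x)`, where
`f|_L (x) = ∑_j a_{n j + i₁} x^j`. -/
noncomputable def redEdge (S : Setup K Kbar) (π : K) (f : K[X])
    (i₁ i₂ : ℕ) (q₁ nρ : ℤ) (n : ℕ) : Polynomial (Residue S) :=
  ∑ j ∈ Finset.range ((i₂ - i₁) / n + 1),
    Polynomial.C (red S (algebraMap K Kbar (f.coeff (n * j + i₁)) *
      (algebraMap K Kbar π) ^ (-(q₁ + (j : ℤ) * nρ)))) * Polynomial.X ^ j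

/-- `f` is NP-regular (`Δ_v`-regular in dimension 1): for every edge `L` of its Newton
polygon, the reduction `f̄|_L` has no multiple roots in the algebraic closure of the residue
field, i.e. is separable. -/
def NPRegular (S : Setup K Kbar) (π : K) (f : K[X]) : Prop :=
  ∀ (s : ℕ) (i : Fin (s + 1) → ℕ) (c : Fin (s + 1) → ℚ),
    IsNPVertices S f s i c →
    ∀ (j : Fin s) (q₁ nρ : ℤ) (n : ℕ),
      (q₁ : ℚ) = c j.castSucc →
      n = (NPslope i c j).den →
      (nρ : ℚ) = (n : ℚ) * NPslope i c j →
      (redEdge S π f (i j.castSucc) (i j.succ) q₁ nρ n).Separable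

/-- The vertex-index function of the Newton polygon of `f(x+w)`, in terms of the sizes of
the clusters `s_1 ⊂ … ⊂ s_{n+1}` centred at `w`; here `t` is the prescribed first index. -/
def vertIdx {n : ℕ} (t : ℕ) (s : Fin (n + 1) → Finset Kbar) : Fin (n + 2) → ℕ :=
  fun j => Fin.cases (motive := fun _ => ℕ) t (fun j' => (s j').card) j

/-- The vertex-value function of the Newton polygon of `f(x+w)`: the vertex over `|s_j|` has
second coordinate `ε_{s_j} - |s_j|·ρ_{s_j}`; `c0` is the prescribed value at the first vertex. -/
def vertVal {n : ℕ} (c0 : ℚ) (s : Fin (n + 1) → Finset Kbar) (ρ ε : Fin (n + 1) → ℚ) :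
    Fin (n + 2) → ℚ :=
  fun j => Fin.cases (motive := fun _ => ℚ) c0 (fun j' => ε j' - ((s j').card : ℚ) * ρ j') j

section CoreAlgebra

lemma core_mult {F : Type*} [Field F] (p : ℕ) [CharP F p] (hp : p.Prime) (h : F[X]) (hh : h ≠ 0)
    (a n' : ℕ) (hn' : ¬ p ∣ n') (w : F) (hw : w ≠ 0) :
    (rootMultiplicity w (expand F (p ^ a * n') h) = p ^ a *
      rootMultiplicity (w ^ (p ^ a)) (expand F n' h)) ∧
    (1 < rootMultiplicity (w ^ (p ^ a)) (expand F n' h) ↔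
      h.eval (w ^ (p ^ a * n')) = 0 ∧ (derivative h).eval (w ^ (p ^ a * n')) = 0) := by
  have : ExpChar F p := ExpChar.prime hp
  have hn0 : n' ≠ 0 := by rintro rfl; exact hn' (dvd_zero _)
  have hne : expand F n' h ≠ 0 := (expand_ne_zero (Nat.pos_of_ne_zero hn0)).mpr hh
  have hn'F : (n' : F) ≠ 0 := by
    rwa [Ne, CharP.cast_eq_zero_iff F p]
  constructor
  · rw [← rootMultiplicity_expand_pow, expand_expand]
  · rw [one_lt_rootMultiplicity_iff_isRoot hne, derivative_expand]
    simp only [IsRoot.def, expand_eval, eval_mul, eval_natCast, eval_pow, eval_X, ← pow_mul,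
      mul_eq_zero, hn'F, pow_eq_zero_iff', hw, false_and, or_false, ne_eq]

lemma core_sep {F ι : Type*} [Field F] (p : ℕ) [CharP F p] (hp : p.Prime) (h : F[X])
    (a n' : ℕ) (hn' : ¬ p ∣ n') (A : Finset ι) (u : ι → F) (hu : ∀ r ∈ A, u r ≠ 0)
    (e : F) (he : e ≠ 0)
    (heq : C e * ∏ r ∈ A, (X - C (u r)) = expand F (p ^ a * n') h) :
    h.Separable ↔ ∀ w, (A.filter (fun r => u r = w)).card ≤ p ^ a := by
  have hn0 : n' ≠ 0 := by rintro rfl; exact hn' (dvd_zero _)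
  have hnn : 0 < p ^ a * n' := Nat.mul_pos (pow_pos hp.pos _) (Nat.pos_of_ne_zero hn0)
  have hprod : (∏ r ∈ A, (X - C (u r)) : F[X]) ≠ 0 :=
    Finset.prod_ne_zero_iff.mpr fun r _ => X_sub_C_ne_zero _
  have hh : h ≠ 0 := by
    rintro rfl
    rw [map_zero] at heq
    exact mul_ne_zero (C_ne_zero.mpr he) hprod heq
  have hmult : ∀ w, rootMultiplicity w (expand F (p ^ a * n') h) =
      (A.filter (fun r => u r = w)).card := by
    intro w
    rw [← heq, ← count_roots, roots_C_mul _ he]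
    have : (∏ r ∈ A, (X - C (u r)) : F[X]) = ((A.val.map u).map (fun x => X - C x)).prod := by
      rw [Multiset.map_map]; rfl
    rw [this, roots_multiset_prod_X_sub_C, Multiset.count_map]
    simp only [Finset.card_def, Finset.filter_val]
    congr 1
    apply Multiset.filter_congr
    intro x _
    exact eq_comm
  constructor
  · intro hs w
    by_cases hw : w = 0
    · have : A.filter (fun r => u r = w) = ∅ := by
        apply Finset.filter_eq_empty_iff.mpr
        intro r hr; rw [hw]; exact hu r hr
      rw [this]; simp
    · obtain ⟨h1, h2⟩ := core_mult p hp h hh a n' hn' w hw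
      rw [← hmult, h1]
      have : ¬ 1 < rootMultiplicity (w ^ (p ^ a)) (expand F n' h) := by
        rw [h2]
        rintro ⟨h3, h4⟩
        obtain ⟨x, y, hxy⟩ := hs
        have := congrArg (eval (w ^ (p ^ a * n'))) hxy
        simp [h3, h4] at this
      calc _ ≤ p ^ a * 1 := Nat.mul_le_mul_left _ (not_lt.mp this)
        _ = _ := mul_one _
  · intro hc
    unfold Polynomial.Separable
    rw [isCoprime_iff_aeval_ne_zero_of_isAlgClosed F (AlgebraicClosure F)]
    intro y
    by_contra! hcon
    obtain ⟨z, hz⟩ := IsAlgClosed.exists_pow_nat_eq y hnn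
    have h1 : aeval z (expand F (p ^ a * n') h) = 0 := by
      rw [expand_aeval, hz]; exact hcon.1
    rw [← heq, map_mul, aeval_C, map_prod] at h1
    have h2 : algebraMap F (AlgebraicClosure F) e ≠ 0 := by
      simpa using he
    have h3 := (mul_eq_zero.mp h1).resolve_left h2
    obtain ⟨r, hr, h4⟩ := Finset.prod_eq_zero_iff.mp h3
    have h5 : z = algebraMap F (AlgebraicClosure F) (u r) := by
      simpa [sub_eq_zero] using h4
    have h6 : y = algebraMap F (AlgebraicClosure F) (u r ^ (p ^ a * n')) := by
      rw [← hz, h5, map_pow]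
    obtain ⟨hm1, hm2⟩ := core_mult p hp h hh a n' hn' (u r) (hu r hr)
    have h7 := hm2.mpr (by
      rw [h6, aeval_algebraMap_apply, aeval_algebraMap_apply] at hcon
      simpa using hcon)
    have h8 := hc (u r)
    rw [← hmult, hm1] at h8
    have : 0 < p ^ a := pow_pos hp.pos _
    nlinarith

lemma padic_bounds (p : ℕ) (hp : p.Prime) (q : ℚ) (a n' : ℕ) (hn' : ¬ p ∣ n')
    (hq : q.den = p ^ a * n') :
    padicNorm p q ≤ (p : ℚ) ^ a ∧ (a ≠ 0 → padicNorm p q = (p : ℚ) ^ a) := by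
  have : Fact p.Prime := ⟨hp⟩
  have hn0 : n' ≠ 0 := by rintro rfl; exact hn' (dvd_zero _)
  have hval : padicValNat p q.den = a := by
    rw [hq, padicValNat.mul (pow_ne_zero _ hp.ne_zero) hn0, padicValNat.prime_pow,
      padicValNat.eq_zero_of_not_dvd hn', add_zero]
  by_cases h0 : q = 0
  · subst h0
    refine ⟨by simp, ?_⟩
    intro ha
    exfalso
    have : p ∣ 1 := by
      have h1 : (0 : ℚ).den = 1 := rfl
      rw [← h1, hq]
      exact Dvd.dvd.mul_right (dvd_pow_self p ha) _
    exact hp.one_lt.ne' (Nat.dvd_one.mp this)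
  · have h1 : padicNorm p q = (p : ℚ) ^ ((a : ℤ) - (padicValInt p q.num : ℤ)) := by
      rw [padicNorm.eq_zpow_of_nonzero h0, padicValRat_def, hval]
      congr 1; ring
    have hp1 : (1 : ℚ) ≤ p := by exact_mod_cast hp.one_lt.le
    constructor
    · rw [h1, ← zpow_natCast]
      exact zpow_le_zpow_right₀ hp1 (by omega)
    · intro ha
      have h2 : ¬ (p : ℤ) ∣ q.num := by
        intro hd
        have hd1 : p ∣ q.num.natAbs := Int.natCast_dvd.mp hd
        have hd2 : p ∣ q.den := by rw [hq]; exact Dvd.dvd.mul_right (dvd_pow_self p ha) _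
        have := Nat.dvd_gcd hd1 hd2
        rw [q.reduced] at this
        exact hp.one_lt.ne' (Nat.dvd_one.mp this)
      have h3 : padicValInt p q.num = 0 := padicValInt.eq_zero_of_not_dvd h2
      rw [h1, h3, ← zpow_natCast]; simp

end CoreAlgebra

section Val

variable (S : Setup K Kbar)

lemma v_ne_zero {x : Kbar} (hx : x ≠ 0) : ∃ q : ℚ, S.v x = (q : WithTop ℚ) := by
  have : S.v x ≠ ⊤ := fun h => hx ((S.v_top_iff x).mp h)
  lift S.v x to ℚ using this with q
  exact ⟨q, rfl⟩

lemma v_zero : S.v 0 = ⊤ := (S.v_top_iff 0).mpr rfl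

lemma ne_zero_of_v {x : Kbar} {q : ℚ} (h : S.v x = (q : WithTop ℚ)) : x ≠ 0 := by
  rintro rfl
  rw [v_zero] at h
  exact WithTop.coe_ne_top h.symm

lemma v_mul_coe {x y : Kbar} {a b : ℚ} (hx : S.v x = (a : WithTop ℚ))
    (hy : S.v y = (b : WithTop ℚ)) : S.v (x * y) = ((a + b : ℚ) : WithTop ℚ) := by
  rw [S.v_mul, hx, hy]; rfl

lemma v_inv_coe {x : Kbar} {a : ℚ} (hx : S.v x = (a : WithTop ℚ)) :
    S.v x⁻¹ = ((-a : ℚ) : WithTop ℚ) := by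
  have h0 := ne_zero_of_v S hx
  obtain ⟨b, hb⟩ := v_ne_zero S (inv_ne_zero h0)
  have := v_mul_coe S hx hb
  rw [mul_inv_cancel₀ h0, S.v_one] at this
  have h2 : (0 : ℚ) = a + b := by exact_mod_cast this
  rw [hb]; congr 1; linarith

lemma v_div_coe {x y : Kbar} {a b : ℚ} (hx : S.v x = (a : WithTop ℚ))
    (hy : S.v y = (b : WithTop ℚ)) : S.v (x / y) = ((a - b : ℚ) : WithTop ℚ) := by
  rw [div_eq_mul_inv, sub_eq_add_neg]; exact v_mul_coe S hx (v_inv_coe S hy)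

lemma v_pow_coe {x : Kbar} {a : ℚ} (hx : S.v x = (a : WithTop ℚ)) (n : ℕ) :
    S.v (x ^ n) = ((n * a : ℚ) : WithTop ℚ) := by
  induction n with
  | zero => simp [S.v_one]
  | succ n ih => rw [pow_succ, v_mul_coe S ih hx]; congr 1; push_cast; ring

lemma v_zpow_coe {x : Kbar} {a : ℚ} (hx : S.v x = (a : WithTop ℚ)) (n : ℤ) :
    S.v (x ^ n) = ((n * a : ℚ) : WithTop ℚ) := by
  obtain ⟨m, rfl | rfl⟩ := n.eq_nat_or_neg
  · rw [zpow_natCast, v_pow_coe S hx]; simp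
  · rw [zpow_neg, zpow_natCast, v_inv_coe S (v_pow_coe S hx m)]; simp

lemma v_sub_ge (x y : Kbar) : min (S.v x) (S.v y) ≤ S.v (x - y) := by
  rw [sub_eq_add_neg, ← S.v_neg y]; exact S.v_add _ _

lemma v_sub_comm (x y : Kbar) : S.v (x - y) = S.v (y - x) := by
  rw [← S.v_neg, neg_sub]

/-- If `v (x - y) > v y` then `v x = v y`. -/
lemma v_eq_of_lt {x y : Kbar} (h : S.v y < S.v (x - y)) : S.v x = S.v y := by
  apply le_antisymm
  · by_contra! hc
    have := v_sub_ge S x (x - y)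
    rw [sub_sub_cancel] at this
    exact absurd (lt_min hc h) (not_lt.mpr this)
  · have := S.v_add (x - y) y
    rw [sub_add_cancel, min_eq_right h.le] at this
    exact this

lemma red_eq {x : Kbar} (h : (0 : WithTop ℚ) ≤ S.v x) :
    red S x = Ideal.Quotient.mk (maxIdeal S) ⟨x, mem_intRing.mpr h⟩ := by
  unfold red; rw [dif_pos h]

lemma mk_eq_zero (x : intRing S) :
    Ideal.Quotient.mk (maxIdeal S) x = 0 ↔ (0 : WithTop ℚ) < S.v (x : Kbar) := by
  rw [Ideal.Quotient.eq_zero_iff_mem]; rfl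

lemma red_eq_red {x y : Kbar} (hx : (0 : WithTop ℚ) ≤ S.v x) (hy : (0 : WithTop ℚ) ≤ S.v y) :
    red S x = red S y ↔ (0 : WithTop ℚ) < S.v (x - y) := by
  rw [red_eq S hx, red_eq S hy, Ideal.Quotient.eq]; rfl

lemma maxIdeal_isMaximal : (maxIdeal S).IsMaximal := by
  rw [Ideal.isMaximal_iff]
  constructor
  · intro h
    have : (0 : WithTop ℚ) < S.v 1 := h
    rw [S.v_one] at this
    exact lt_irrefl _ this
  · intro J x hJ hx hxJ
    have h1 : ¬ (0 : WithTop ℚ) < S.v (x : Kbar) := hx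
    have h2 : (0 : WithTop ℚ) ≤ S.v (x : Kbar) := x.2
    have h3 : S.v (x : Kbar) = ((0 : ℚ) : WithTop ℚ) := le_antisymm (not_lt.mp h1) h2
    have h4 := v_inv_coe S h3
    have h5 : (0 : WithTop ℚ) ≤ S.v (x : Kbar)⁻¹ := by rw [h4]; simp
    have h6 : (⟨(x : Kbar)⁻¹, mem_intRing.mpr h5⟩ : intRing S) * x = 1 := by
      apply Subtype.ext
      exact inv_mul_cancel₀ (ne_zero_of_v S h3)
    rw [← h6]
    exact J.mul_mem_left _ hxJ

/-- roots with valuation greater than that of `θ` -/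
noncomputable def rootsGt (f : K[X]) (θ : Kbar) : Finset Kbar :=
  (rootFinset f).filter fun r => S.v θ < S.v r

/-- roots with valuation equal to that of `θ` -/
noncomputable def rootsEq (f : K[X]) (θ : Kbar) : Finset Kbar :=
  (rootFinset f).filter fun r => S.v r = S.v θ

lemma factor_red {θ : Kbar} (hθ : θ ≠ 0) (r : Kbar) :
    ∃ (c : Kbar) (P : (intRing S)[X]), c ≠ 0 ∧
      C c * P.map (intRing S).subtype = C θ * X - C r ∧
      P.map (Ideal.Quotient.mk (maxIdeal S)) =
        if S.v θ < S.v r then X else if S.v r = S.v θ then X - C (red S (r / θ)) else 1 := by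
  obtain ⟨t, ht⟩ := v_ne_zero S hθ
  by_cases hle : S.v θ ≤ S.v r
  · have h0 : (0 : WithTop ℚ) ≤ S.v (r / θ) := by
      by_cases hr : r = 0
      · simp [hr, v_zero]
      · obtain ⟨q, hq⟩ := v_ne_zero S hr
        rw [v_div_coe S hq ht]
        rw [ht, hq] at hle
        have : t ≤ q := by exact_mod_cast hle
        exact_mod_cast sub_nonneg.mpr this
    refine ⟨θ, X - C ⟨r / θ, mem_intRing.mpr h0⟩, hθ, ?_, ?_⟩
    · simp only [Polynomial.map_sub, map_X, map_C, Subring.subtype_apply, mul_sub, ← C_mul]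
      rw [mul_div_cancel₀ _ hθ]
    · simp only [Polynomial.map_sub, map_X, map_C, ← red_eq S h0]
      split_ifs with h1 h2
      · have : red S (r / θ) = 0 := by
          rw [red_eq S h0, mk_eq_zero]
          show (0 : WithTop ℚ) < S.v (r / θ)
          by_cases hr : r = 0
          · simp [hr, v_zero]
          · obtain ⟨q, hq⟩ := v_ne_zero S hr
            rw [v_div_coe S hq ht]
            rw [ht, hq] at h1
            have : t < q := by exact_mod_cast h1
            exact_mod_cast sub_pos.mpr this
        rw [this]; simp
      · rfl
      · exact absurd (le_antisymm (not_lt.mp h1) hle) h2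
  · have hlt := not_le.mp hle
    have hr : r ≠ 0 := by
      rintro rfl; rw [v_zero] at hlt; exact not_top_lt hlt
    obtain ⟨q, hq⟩ := v_ne_zero S hr
    have h0 : (0 : WithTop ℚ) < S.v (θ / r) := by
      rw [v_div_coe S ht hq]
      rw [ht, hq] at hlt
      have : q < t := by exact_mod_cast hlt
      exact_mod_cast sub_pos.mpr this
    refine ⟨-r, 1 - C ⟨θ / r, mem_intRing.mpr h0.le⟩ * X, neg_ne_zero.mpr hr, ?_, ?_⟩
    · simp only [Polynomial.map_sub, Polynomial.map_mul, Polynomial.map_one, map_X, map_C,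
        Subring.subtype_apply, mul_sub, ← mul_assoc, ← C_mul, mul_one]
      rw [neg_mul, mul_div_cancel₀ _ hr]
      simp; ring
    · rw [if_neg (not_lt.mpr hlt.le), if_neg hlt.ne]
      have : Ideal.Quotient.mk (maxIdeal S) ⟨θ / r, mem_intRing.mpr h0.le⟩ = 0 :=
        (mk_eq_zero S _).mpr h0
      simp [this]

lemma f_eq_prod (S : Setup K Kbar) (f : K[X]) (hsep : f.Separable) :
    f.map (algebraMap K Kbar) = C (algebraMap K Kbar f.leadingCoeff) *
      ∏ r ∈ rootFinset (Kbar := Kbar) f, (X - C r) := by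
  have := S.algClosed
  have h1 := (IsAlgClosed.splits (f.map (algebraMap K Kbar))).eq_prod_roots
  have h2 : (f.map (algebraMap K Kbar)).roots.Nodup := nodup_roots hsep.map
  rw [leadingCoeff_map] at h1
  conv_lhs => rw [h1]
  congr 1
  unfold rootFinset
  rw [Finset.prod, Multiset.toFinset_val, h2.dedup]

lemma card_roots (S : Setup K Kbar) (f : K[X]) (hsep : f.Separable) :
    (rootFinset (Kbar := Kbar) f).card = f.natDegree := by
  have h := congrArg natDegree (f_eq_prod S f hsep)
  rw [natDegree_map, natDegree_C_mul (by simpa using hsep.ne_zero),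
    natDegree_prod_of_monic _ _ (fun r _ => monic_X_sub_C r)] at h
  simpa using h.symm

lemma key (f : K[X]) (hsep : f.Separable) {θ : Kbar} (hθ : θ ≠ 0) :
    ∃ (c : Kbar) (P : (intRing S)[X]), c ≠ 0 ∧
      (∀ m, algebraMap K Kbar (f.coeff m) * θ ^ m = c * (P.coeff m : Kbar)) ∧
      P.map (Ideal.Quotient.mk (maxIdeal S)) =
        X ^ (rootsGt S f θ).card * ∏ r ∈ rootsEq S f θ, (X - C (red S (r / θ))) := by
  choose c P hc h1 h2 using factor_red S hθ
  refine ⟨algebraMap K Kbar f.leadingCoeff * ∏ r ∈ rootFinset f, c r,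
    ∏ r ∈ rootFinset f, P r, ?_, ?_, ?_⟩
  · refine mul_ne_zero (by simpa using hsep.ne_zero) (Finset.prod_ne_zero_iff.mpr fun r _ => hc r)
  · intro m
    have h3 : (f.map (algebraMap K Kbar)).comp (C θ * X) =
        C (algebraMap K Kbar f.leadingCoeff * ∏ r ∈ rootFinset f, c r) *
          (∏ r ∈ rootFinset f, P r).map (intRing S).subtype := by
      rw [f_eq_prod S f hsep, mul_comp, prod_comp, Polynomial.map_prod, C_mul, map_prod, mul_assoc,
        ← Finset.prod_mul_distrib, C_comp]
      congr 1
      apply Finset.prod_congr rfl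
      intro r _
      rw [h1]; simp
    have h4 := congrArg (fun q => coeff q m) h3
    simp only [comp_C_mul_X_coeff, coeff_map, coeff_C_mul] at h4
    exact h4
  · rw [Polynomial.map_prod, Finset.prod_congr rfl (fun r _ => h2 r), Finset.prod_ite,
      Finset.prod_const]
    congr 1
    rw [← Finset.prod_filter, Finset.filter_filter]
    apply Finset.prod_congr _ (fun _ _ => rfl)
    unfold rootsEq
    apply Finset.filter_congr
    intro r _
    constructor
    · exact fun h => h.2
    · exact fun h => ⟨by rw [h]; exact lt_irrefl _, h⟩

end Val

section NP

variable (S : Setup K Kbar)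

lemma card_gt_add_eq (f : K[X]) (θ : Kbar) :
    (rootsGt S f θ).card + (rootsEq S f θ).card =
      ((rootFinset f).filter fun r => S.v θ ≤ S.v r).card := by
  unfold rootsGt rootsEq
  rw [← Finset.card_union_of_disjoint, ← Finset.filter_or]
  · congr 1
    apply Finset.filter_congr
    intro r _
    rw [le_iff_lt_or_eq, eq_comm]
  · rw [Finset.disjoint_filter]
    intro r _ h1 h2
    rw [h2] at h1
    exact lt_irrefl _ h1

lemma red_ne_zero {r θ : Kbar} (hθ : θ ≠ 0) (h : S.v r = S.v θ) : red S (r / θ) ≠ 0 := by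
  obtain ⟨t, ht⟩ := v_ne_zero S hθ
  rw [ht] at h
  have h1 := v_div_coe S h ht
  rw [sub_self] at h1
  have h2 : S.v (r / θ) = 0 := h1
  rw [red_eq S h2.ge, Ne, mk_eq_zero]
  show ¬ (0 : WithTop ℚ) < S.v (r / θ)
  rw [h2]; exact lt_irrefl _

lemma mk_coeff_ne_zero_iff {a θ c : Kbar} {x : intRing S} {m : ℕ} {lam γ q : ℚ}
    (hθ : S.v θ = (lam : WithTop ℚ)) (hc : S.v c = (γ : WithTop ℚ)) (ha : S.v a = (q : WithTop ℚ))
    (h : a * θ ^ m = c * (x : Kbar)) :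
    γ ≤ q + m * lam ∧ (Ideal.Quotient.mk (maxIdeal S) x ≠ 0 ↔ q + m * lam = γ) := by
  have h1 := v_mul_coe S ha (v_pow_coe S hθ m)
  have hx0 : (x : Kbar) ≠ 0 := by
    intro h0
    rw [h0, mul_zero] at h
    exact ne_zero_of_v S h1 h
  obtain ⟨y, hy⟩ := v_ne_zero S hx0
  rw [h, v_mul_coe S hc hy] at h1
  have h2 : γ + y = q + m * lam := by exact_mod_cast h1
  have h3 : (0 : WithTop ℚ) ≤ S.v (x : Kbar) := x.2
  rw [hy] at h3
  have h4 : 0 ≤ y := by exact_mod_cast h3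
  refine ⟨by linarith, ?_⟩
  rw [Ne, mk_eq_zero, hy]
  have : (0 : WithTop ℚ) < (y : WithTop ℚ) ↔ 0 < y := by
    exact_mod_cast Iff.rfl
  rw [this]
  constructor
  · intro h; linarith [not_lt.mp h]
  · intro h; linarith

lemma key_num (f : K[X]) {θ c : Kbar} {P : (intRing S)[X]} {lam γ : ℚ}
    (hθ : S.v θ = (lam : WithTop ℚ)) (hc : S.v c = (γ : WithTop ℚ))
    (h1 : ∀ m, algebraMap K Kbar (f.coeff m) * θ ^ m = c * (P.coeff m : Kbar))
    (h2 : P.map (Ideal.Quotient.mk (maxIdeal S)) =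
        X ^ (rootsGt S f θ).card * ∏ r ∈ rootsEq S f θ, (X - C (red S (r / θ)))) :
    (∀ m (q : ℚ), S.vK (f.coeff m) = (q : WithTop ℚ) → γ ≤ q + m * lam ∧
      (q + m * lam = γ → (rootsGt S f θ).card ≤ m ∧
        m ≤ (rootsGt S f θ).card + (rootsEq S f θ).card)) ∧
    S.vK (f.coeff (rootsGt S f θ).card) = ((γ - (rootsGt S f θ).card * lam : ℚ) : WithTop ℚ) ∧
    S.vK (f.coeff ((rootsGt S f θ).card + (rootsEq S f θ).card)) =
      ((γ - ((rootsGt S f θ).card + (rootsEq S f θ).card : ℕ) * lam : ℚ) : WithTop ℚ) := by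
  have hmax := maxIdeal_isMaximal S
  let : Field (Residue S) := Ideal.Quotient.field (maxIdeal S)
  have hθ0 := ne_zero_of_v S hθ
  have hc0 := ne_zero_of_v S hc
  set Q : (Residue S)[X] := ∏ r ∈ rootsEq S f θ, (X - C (red S (r / θ))) with hQ
  have hQdeg : Q.natDegree = (rootsEq S f θ).card := by
    rw [hQ, natDegree_prod_of_monic _ _ (fun r _ => monic_X_sub_C _)]
    simp
  have hQm : Q.Monic := monic_prod_of_monic _ _ (fun r _ => monic_X_sub_C _)
  have hcoef : ∀ m, Ideal.Quotient.mk (maxIdeal S) (P.coeff m) =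
      (X ^ (rootsGt S f θ).card * Q).coeff m := by
    intro m; rw [← h2, coeff_map]
  have hQ0 : Q.coeff 0 ≠ 0 := by
    rw [coeff_zero_eq_eval_zero, hQ, eval_prod]
    apply Finset.prod_ne_zero_iff.mpr
    intro r hr
    have := red_ne_zero S hθ0 (Finset.mem_filter.mp hr).2
    simpa using this
  have hval : ∀ m, Ideal.Quotient.mk (maxIdeal S) (P.coeff m) ≠ 0 →
      S.vK (f.coeff m) = ((γ - m * lam : ℚ) : WithTop ℚ) := by
    intro m hm
    have ha0 : algebraMap K Kbar (f.coeff m) ≠ 0 := by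
      intro h0
      have := h1 m
      rw [h0, zero_mul] at this
      have h3 : (P.coeff m : Kbar) = 0 := by
        rcases mul_eq_zero.mp this.symm with h | h
        · exact absurd h hc0
        · exact h
      have h4 : P.coeff m = 0 := Subtype.ext h3
      rw [h4, map_zero] at hm
      exact hm rfl
    obtain ⟨q, hq⟩ := v_ne_zero S ha0
    have h5 := ((mk_coeff_ne_zero_iff S hθ hc hq (h1 m)).2).mp hm
    unfold Setup.vK
    rw [hq]; congr 1; linarith
  refine ⟨?_, ?_, ?_⟩
  · intro m q hq
    obtain ⟨h3, h4⟩ := mk_coeff_ne_zero_iff S hθ hc hq (h1 m)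
    refine ⟨h3, fun h5 => ?_⟩
    have h6 := h4.mpr h5
    rw [hcoef, coeff_X_pow_mul'] at h6
    split_ifs at h6 with h7
    · refine ⟨h7, ?_⟩
      have := le_natDegree_of_ne_zero h6
      rw [hQdeg] at this
      omega
    · exact absurd rfl h6
  · apply hval
    rw [hcoef, coeff_X_pow_mul', if_pos le_rfl, Nat.sub_self]
    exact hQ0
  · apply hval
    rw [hcoef, coeff_X_pow_mul', if_pos (Nat.le_add_right _ _), Nat.add_sub_cancel_left, ← hQdeg,
      hQm.coeff_natDegree]
    exact one_ne_zero

lemma den_dvd {ρ : ℚ} {k : ℕ} {z : ℤ} (h : ρ * k = z) : ρ.den ∣ k := by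
  have h1 : (ρ.num : ℚ) * k = z * ρ.den := by
    have h2 : ρ * ρ.den = ρ.num := Rat.mul_den_eq_num ρ
    rw [← h2, ← h]; ring
  have h2 : ρ.num * (k : ℤ) = z * ρ.den := by exact_mod_cast h1
  have h3 : (ρ.den : ℤ) ∣ ρ.num * k := ⟨z, by rw [h2]; ring⟩
  have h4 : IsCoprime (ρ.den : ℤ) ρ.num := by
    rw [Int.isCoprime_iff_gcd_eq_one, Int.gcd_comm]
    have := ρ.reduced
    unfold Nat.Coprime at this
    simpa [Int.gcd] using this
  exact_mod_cast h4.dvd_of_dvd_mul_left h3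

lemma residue_charP {p : ℕ} (hp : p.Prime) (hres : ((0 : ℚ) : WithTop ℚ) < S.vK (p : K)) :
    CharP (Residue S) p := by
  have hmax := maxIdeal_isMaximal S
  let : Field (Residue S) := Ideal.Quotient.field (maxIdeal S)
  rw [CharP.charP_iff_prime_eq_zero hp]
  have h1 : ((p : Residue S)) = Ideal.Quotient.mk (maxIdeal S) (p : intRing S) := by simp
  rw [h1, mk_eq_zero]
  unfold Setup.vK at hres
  simpa using hres

lemma edge_sep (f : K[X]) (hsep : f.Separable) (π : K) (hπ : S.vK π = ((1 : ℚ) : WithTop ℚ))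
    {p : ℕ} (hp : p.Prime) (hres : ((0 : ℚ) : WithTop ℚ) < S.vK (p : K))
    (i₁ i₂ : ℕ) (q₁ nρ : ℤ) (n : ℕ) (ρ : ℚ) (hn : n = ρ.den)
    (θ : Kbar) (hθ : θ ^ n = (algebraMap K Kbar π) ^ (-nρ))
    (hθv : S.v θ = ((-ρ : ℚ) : WithTop ℚ))
    (hi₁ : i₁ = (rootsGt S f θ).card)
    (hi₂ : i₂ = (rootsGt S f θ).card + (rootsEq S f θ).card)
    (hq₁ : S.vK (f.coeff i₁) = ((q₁ : ℚ) : WithTop ℚ))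
    (a n' : ℕ) (hn' : ¬ p ∣ n') (han : n = p ^ a * n') :
    (redEdge S π f i₁ i₂ q₁ nρ n).Separable ↔
      ∀ w, ((rootsEq S f θ).filter (fun r => red S (r / θ) = w)).card ≤ p ^ a := by
  have hmax := maxIdeal_isMaximal S
  let : Field (Residue S) := Ideal.Quotient.field (maxIdeal S)
  have hchar := residue_charP S hp hres
  have hθ0 := ne_zero_of_v S hθv
  have hπ0 : algebraMap K Kbar π ≠ 0 := ne_zero_of_v S hπ
  have hnpos : 0 < n := by rw [hn]; exact ρ.den_pos
  obtain ⟨c, P, hc0, h1, h2⟩ := key S f hsep hθ0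
  obtain ⟨γ, hγ⟩ := v_ne_zero S hc0
  obtain ⟨k1, k2, k3⟩ := key_num S f hθv hγ h1 h2
  rw [← hi₁, hq₁] at k2
  have hγq : (q₁ : ℚ) = γ - i₁ * (-ρ) := by exact_mod_cast k2
  set e : Kbar := c / ((algebraMap K Kbar π) ^ q₁ * θ ^ i₁) with he
  have hev : S.v e = 0 := by
    rw [he, v_div_coe S hγ (v_mul_coe S (v_zpow_coe S hπ q₁) (v_pow_coe S hθv i₁))]
    have : γ - ((q₁ : ℚ) * 1 + i₁ * -ρ) = 0 := by rw [hγq]; ring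
    rw [this]; rfl
  set E : Residue S := Ideal.Quotient.mk (maxIdeal S) ⟨e, mem_intRing.mpr hev.ge⟩ with hE
  have hE0 : E ≠ 0 := by
    rw [hE, Ne, mk_eq_zero]
    show ¬ (0 : WithTop ℚ) < S.v e
    rw [hev]; exact lt_irrefl _
  set Q : (Residue S)[X] := ∏ r ∈ rootsEq S f θ, (X - C (red S (r / θ))) with hQ
  have hQdeg : Q.natDegree = (rootsEq S f θ).card := by
    rw [hQ, natDegree_prod_of_monic _ _ (fun r _ => monic_X_sub_C _)]
    simp
  have hcoef : ∀ k, Q.coeff k = Ideal.Quotient.mk (maxIdeal S) (P.coeff (k + i₁)) := by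
    intro k
    rw [← coeff_map, h2, ← hi₁, coeff_X_pow_mul]
  have hredc : ∀ j : ℕ, red S (algebraMap K Kbar (f.coeff (n * j + i₁)) *
      (algebraMap K Kbar π) ^ (-(q₁ + (j : ℤ) * nρ))) = E * Q.coeff (n * j) := by
    intro j
    have h3 : algebraMap K Kbar (f.coeff (n * j + i₁)) *
      (algebraMap K Kbar π) ^ (-(q₁ + (j : ℤ) * nρ)) = e * (P.coeff (n * j + i₁) : Kbar) := by
      have h4 : (algebraMap K Kbar π) ^ (-(q₁ + (j : ℤ) * nρ)) =
          ((algebraMap K Kbar π) ^ q₁)⁻¹ * θ ^ (n * j) := by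
        rw [pow_mul, hθ, ← zpow_natCast, ← zpow_mul, ← zpow_neg, ← zpow_add₀ hπ0]
        congr 1; ring
      have h5 := h1 (n * j + i₁)
      rw [h4, he]
      have h6 : (algebraMap K Kbar π) ^ q₁ ≠ 0 := zpow_ne_zero _ hπ0
      have h7 : θ ^ i₁ ≠ 0 := pow_ne_zero _ hθ0
      rw [pow_add] at h5
      field_simp
      linear_combination h5
    have h8 : (0 : WithTop ℚ) ≤ S.v (e * (P.coeff (n * j + i₁) : Kbar)) := by
      rw [S.v_mul, hev, zero_add]; exact (P.coeff (n * j + i₁)).2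
    rw [h3, red_eq S h8, hcoef, hE, ← map_mul]
    rfl
  have hmain : C E * Q = expand (Residue S) (p ^ a * n') (redEdge S π f i₁ i₂ q₁ nρ n) := by
    rw [← han]
    ext k
    rw [coeff_C_mul, coeff_expand hnpos]
    split_ifs with hk
    · obtain ⟨j, rfl⟩ := hk
      rw [Nat.mul_div_cancel_left _ hnpos]
      unfold redEdge
      simp only [finsetSum_coeff, coeff_C_mul, coeff_X_pow, mul_ite, mul_one, mul_zero]
      rw [Finset.sum_ite_eq]
      split_ifs with hj
      · rw [hredc]
      · have : Q.coeff (n * j) = 0 := by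
          apply coeff_eq_zero_of_natDegree_lt
          rw [hQdeg]
          rw [Finset.mem_range, not_lt] at hj
          have h3 : (i₂ - i₁) / n < j := hj
          rw [Nat.div_lt_iff_lt_mul hnpos] at h3
          have h4 : i₂ - i₁ = (rootsEq S f θ).card := by omega
          rw [h4] at h3
          rw [mul_comm]; exact h3
        rw [this, mul_zero]
    · by_contra hne
      have hne' : Q.coeff k ≠ 0 := fun h => hne (by rw [h, mul_zero])
      rw [hcoef] at hne'
      have ha0 : f.coeff (k + i₁) ≠ 0 := by
        intro h0
        have h3 := h1 (k + i₁)
        rw [h0, map_zero, zero_mul] at h3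
        have h4 : (P.coeff (k + i₁) : Kbar) = 0 := (mul_eq_zero.mp h3.symm).resolve_left hc0
        have h5 : P.coeff (k + i₁) = 0 := Subtype.ext h4
        rw [h5, map_zero] at hne'
        exact hne' rfl
      obtain ⟨z, hz⟩ := S.v_base_int _ ha0
      have h6 := ((mk_coeff_ne_zero_iff S hθv hγ hz (h1 _)).2).mp hne'
      apply hk
      rw [hn]
      apply den_dvd (z := z - q₁)
      push_cast at h6 ⊢
      rw [hγq]
      linarith
  exact core_sep p hp _ a n' hn' (rootsEq S f θ) (fun r => red S (r / θ))
    (fun r hr => red_ne_zero S hθ0 (Finset.mem_filter.mp hr).2) E hE0 hmain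

lemma exists_theta (π : K) (hπ : S.vK π = ((1 : ℚ) : WithTop ℚ)) (ρ : ℚ) (n : ℕ) (nρ : ℤ)
    (hn : n = ρ.den) (hnρ : (nρ : ℚ) = n * ρ) :
    ∃ θ : Kbar, θ ^ n = (algebraMap K Kbar π) ^ (-nρ) ∧ S.v θ = ((-ρ : ℚ) : WithTop ℚ) := by
  have := S.algClosed
  have hnpos : 0 < n := by rw [hn]; exact ρ.den_pos
  have hπ0 : algebraMap K Kbar π ≠ 0 := ne_zero_of_v S hπ
  obtain ⟨θ, hθ⟩ := IsAlgClosed.exists_pow_nat_eq ((algebraMap K Kbar π) ^ (-nρ)) hnpos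
  refine ⟨θ, hθ, ?_⟩
  have hθ0 : θ ≠ 0 := by
    rintro rfl
    rw [zero_pow hnpos.ne'] at hθ
    exact zpow_ne_zero _ hπ0 hθ.symm
  obtain ⟨t, ht⟩ := v_ne_zero S hθ0
  have h1 := v_pow_coe S ht n
  rw [hθ, v_zpow_coe S hπ] at h1
  have h2 : ((-nρ : ℤ) : ℚ) * 1 = n * t := by exact_mod_cast h1
  push_cast at h2
  rw [hnρ] at h2
  rw [ht]
  congr 1
  have hn0 : (n : ℚ) ≠ 0 := by exact_mod_cast hnpos.ne'
  apply mul_left_cancel₀ hn0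
  linarith

lemma np_line {f : K[X]} {s : ℕ} {i : Fin (s + 1) → ℕ} {c : Fin (s + 1) → ℚ}
    (h : IsNPVertices S f s i c) (j : Fin s) :
    c j.succ = c j.castSucc + NPslope i c j * ((i j.succ : ℚ) - i j.castSucc) ∧
    ∀ (m : ℕ) (q : ℚ), S.vK (f.coeff m) = ((q : ℚ) : WithTop ℚ) →
      c j.castSucc + NPslope i c j * ((m : ℚ) - i j.castSucc) ≤ q := by
  have h1 : i j.castSucc < i j.succ := h.mono Fin.castSucc_lt_succ
  have h2 : (0 : ℚ) < (i j.succ : ℚ) - i j.castSucc := by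
    rw [sub_pos]; exact_mod_cast h1
  have h3 : c j.succ = c j.castSucc + NPslope i c j * ((i j.succ : ℚ) - i j.castSucc) := by
    unfold NPslope
    rw [div_mul_cancel₀ _ h2.ne']; ring
  refine ⟨h3, fun m q hq => ?_⟩
  have h4 := h.support j m q hq
  have h5 : c j.succ - c j.castSucc = NPslope i c j * ((i j.succ : ℚ) - i j.castSucc) := by
    linarith
  rw [h5] at h4
  have h6 : (NPslope i c j * ((m : ℚ) - i j.castSucc)) * ((i j.succ : ℚ) - i j.castSucc) ≤
      (q - c j.castSucc) * ((i j.succ : ℚ) - i j.castSucc) := by linarith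
  have := le_of_mul_le_mul_right h6 h2
  linarith

lemma np_ident {f : K[X]} (hsep : f.Separable) (h0 : f.coeff 0 ≠ 0)
    {s : ℕ} {i : Fin (s + 1) → ℕ} {c : Fin (s + 1) → ℚ}
    (h : IsNPVertices S f s i c) (j : Fin s) {θ : Kbar}
    (hθ : S.v θ = ((-NPslope i c j : ℚ) : WithTop ℚ)) :
    i j.castSucc = (rootsGt S f θ).card ∧
      i j.succ = (rootsGt S f θ).card + (rootsEq S f θ).card := by
  obtain ⟨C0, P, hc0, h1, h2⟩ := key S f hsep (ne_zero_of_v S hθ)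
  obtain ⟨γ, hγ⟩ := v_ne_zero S hc0
  obtain ⟨k1, k2, k3⟩ := key_num S f hθ hγ h1 h2
  set N1 := (rootsGt S f θ).card
  set N2 := N1 + (rootsEq S f θ).card
  obtain ⟨l1, l2⟩ := np_line S h j
  set ρ := NPslope i c j
  obtain ⟨a1, a2⟩ := k1 _ _ (h.vert j.castSucc)
  obtain ⟨b1, b2⟩ := k1 _ _ (h.vert j.succ)
  have l3 := l2 _ _ k2
  have e1 : c j.castSucc + i j.castSucc * (-ρ) = γ := by linarith
  have e2 : c j.succ + i j.succ * (-ρ) = γ := by linarith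
  have hlow := (a2 e1).1
  have hup := (b2 e2).2
  constructor
  · by_contra hne
    have hlt : N1 < i j.castSucc := lt_of_le_of_ne hlow (Ne.symm hne)
    have htr : f.natTrailingDegree = 0 := natTrailingDegree_eq_zero.mpr (Or.inr h0)
    have hj : j.val ≠ 0 := by
      intro hj0
      have : j.castSucc = 0 := Fin.ext hj0
      rw [this, h.first, htr] at hlt
      exact Nat.not_lt_zero _ hlt
    have hj1 : j.val - 1 < s := by omega
    have hs : (⟨j.val - 1, hj1⟩ : Fin s).succ = j.castSucc := by
      apply Fin.ext; simp; omega
    have hlt2 : (⟨j.val - 1, hj1⟩ : Fin s) < j := by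
      rw [Fin.lt_def]; simp; omega
    have hsl := h.slope_mono hlt2
    obtain ⟨m1, m2⟩ := np_line S h ⟨j.val - 1, hj1⟩
    have m3 := m2 _ _ k2
    rw [hs] at m1
    have hltQ : (N1 : ℚ) < i j.castSucc := by exact_mod_cast hlt
    have : NPslope i c ⟨j.val - 1, hj1⟩ < ρ := hsl
    nlinarith
  · by_contra hne
    have hlt : i j.succ < N2 := lt_of_le_of_ne hup hne
    have hN2 : N2 ≤ f.natDegree := by
      apply le_natDegree_of_ne_zero
      intro hz
      unfold Setup.vK at k3
      rw [hz, map_zero, v_zero] at k3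
      exact WithTop.coe_ne_top k3.symm
    have hj1 : j.val + 1 < s := by
      by_contra hge
      have : j.succ = Fin.last s := by
        apply Fin.ext; simp; omega
      rw [this, h.last] at hlt
      omega
    have hs : (⟨j.val + 1, hj1⟩ : Fin s).castSucc = j.succ := by
      apply Fin.ext; simp
    have hlt2 : j < (⟨j.val + 1, hj1⟩ : Fin s) := by
      rw [Fin.lt_def]; simp
    have hsl := h.slope_mono hlt2
    obtain ⟨m1, m2⟩ := np_line S h ⟨j.val + 1, hj1⟩
    have m3 := m2 _ _ k3
    rw [hs] at m3
    have hltQ : (i j.succ : ℚ) < N2 := by exact_mod_cast hlt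
    have : ρ < NPslope i c ⟨j.val + 1, hj1⟩ := hsl
    nlinarith

lemma root_ne_zero {f : K[X]} (h0 : f.coeff 0 ≠ 0) {r : Kbar} (hr : r ∈ rootFinset f) : r ≠ 0 := by
  rintro rfl
  unfold rootFinset at hr
  rw [Multiset.mem_toFinset] at hr
  have := isRoot_of_mem_roots hr
  rw [IsRoot.def, ← coeff_zero_eq_eval_zero, coeff_map] at this
  exact h0 (by simpa using this)

lemma np_exists {f : K[X]} (hsep : f.Separable) (hdeg : 1 ≤ f.natDegree) (h0 : f.coeff 0 ≠ 0) :
    ∃ (s : ℕ) (i : Fin (s + 1) → ℕ) (c : Fin (s + 1) → ℚ), IsNPVertices S f s i c ∧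
      ∀ r ∈ rootFinset (Kbar := Kbar) f, ∀ lam : ℚ, S.v r = (lam : WithTop ℚ) →
        ∃ j, NPslope i c j = -lam := by
  set W : Finset ℚ := (rootFinset (Kbar := Kbar) f).image fun r => -((S.v r).untopD 0) with hW
  set ρ : Fin W.card ↪o ℚ := W.orderEmbOfFin rfl with hρ
  have hroot : ∀ r ∈ rootFinset (Kbar := Kbar) f, ∃ t, S.v r = ((-ρ t : ℚ) : WithTop ℚ) := by
    intro r hr
    obtain ⟨q, hq⟩ := v_ne_zero S (root_ne_zero h0 hr)
    have h1 : -q ∈ W := by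
      rw [hW, Finset.mem_image]
      exact ⟨r, hr, by rw [hq]; rfl⟩
    have h2 : -q ∈ Set.range ρ := by rw [hρ, Finset.range_orderEmbOfFin]; exact h1
    obtain ⟨t, ht⟩ := h2
    exact ⟨t, by rw [hq, ht, neg_neg]⟩
  have hex : ∀ j, ∃ θ ∈ rootFinset (Kbar := Kbar) f, S.v θ = ((-ρ j : ℚ) : WithTop ℚ) := by
    intro j
    have h1 : ρ j ∈ W := by rw [hρ]; exact Finset.orderEmbOfFin_mem _ _ _
    obtain ⟨r, hr, hr2⟩ := Finset.mem_image.mp h1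
    obtain ⟨q, hq⟩ := v_ne_zero S (root_ne_zero h0 hr)
    refine ⟨r, hr, ?_⟩
    rw [← hr2, hq]; simp
  choose θ hθm hθv using hex
  have hcoe : ∀ a b : ℚ, ((a : ℚ) : WithTop ℚ) < ((b : ℚ) : WithTop ℚ) ↔ a < b :=
    fun a b => WithTop.coe_lt_coe
  have hcoe' : ∀ a b : ℚ, ((a : ℚ) : WithTop ℚ) ≤ ((b : ℚ) : WithTop ℚ) ↔ a ≤ b :=
    fun a b => WithTop.coe_le_coe
  set i : Fin (W.card + 1) → ℕ := fun k => ((rootFinset (Kbar := Kbar) f).filter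
    fun r => ∃ j : Fin W.card, j.castSucc < k ∧ S.v r = ((-ρ j : ℚ) : WithTop ℚ)).card with hi
  have hmem : ∀ r t k, S.v r = ((-ρ t : ℚ) : WithTop ℚ) →
      ((∃ j : Fin W.card, j.castSucc < k ∧ S.v r = ((-ρ j : ℚ) : WithTop ℚ)) ↔
        t.castSucc < k) := by
    intro r t k ht
    constructor
    · rintro ⟨j, hj, hj2⟩
      have h1 : -ρ t = -ρ j := by
        rw [ht] at hj2; exact_mod_cast hj2
      have h2 : t = j := ρ.injective (by linarith)
      rw [h2]; exact hj
    · intro h; exact ⟨t, h, ht⟩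
  have hi1 : ∀ j : Fin W.card, i j.castSucc = (rootsGt S f (θ j)).card := by
    intro j
    simp only [hi, rootsGt]
    congr 1
    apply Finset.filter_congr
    intro r hr
    obtain ⟨t, ht⟩ := hroot r hr
    rw [hmem r t _ ht, hθv, ht, hcoe, neg_lt_neg_iff, ρ.lt_iff_lt, Fin.castSucc_lt_castSucc_iff]
  have hi2 : ∀ j : Fin W.card, i j.succ =
      (rootsGt S f (θ j)).card + (rootsEq S f (θ j)).card := by
    intro j
    rw [card_gt_add_eq]
    simp only [hi]
    congr 1
    apply Finset.filter_congr
    intro r hr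
    obtain ⟨t, ht⟩ := hroot r hr
    rw [hmem r t _ ht, hθv, ht, hcoe', neg_le_neg_iff, ρ.le_iff_le, Fin.castSucc_lt_succ_iff]
  set c : Fin (W.card + 1) → ℚ := fun k => (S.vK (f.coeff (i k))).untopD 0 with hc
  have hall : ∀ j : Fin W.card, ∃ γ : ℚ,
      (∀ m (q : ℚ), S.vK (f.coeff m) = (q : WithTop ℚ) → γ ≤ q + m * (-ρ j)) ∧
      S.vK (f.coeff (i j.castSucc)) = ((γ - (i j.castSucc) * (-ρ j) : ℚ) : WithTop ℚ) ∧
      S.vK (f.coeff (i j.succ)) = ((γ - (i j.succ) * (-ρ j) : ℚ) : WithTop ℚ) := by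
    intro j
    obtain ⟨C0, P, hc0, h1, h2⟩ := key S f hsep (ne_zero_of_v S (hθv j))
    obtain ⟨γ, hγ⟩ := v_ne_zero S hc0
    obtain ⟨k1, k2, k3⟩ := key_num S f (hθv j) hγ h1 h2
    refine ⟨γ, fun m q hq => (k1 m q hq).1, ?_, ?_⟩
    · rw [hi1]; exact k2
    · rw [hi2]; exact k3
  have hlast : i (Fin.last _) = f.natDegree := by
    rw [← card_roots S f hsep]
    simp only [hi]
    congr 1
    apply Finset.filter_true_of_mem
    intro r hr
    obtain ⟨t, ht⟩ := hroot r hr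
    exact ⟨t, Fin.castSucc_lt_last t, ht⟩
  have hvert : ∀ k, S.vK (f.coeff (i k)) = ((c k : ℚ) : WithTop ℚ) := by
    intro k
    have hne : f.coeff (i k) ≠ 0 := by
      induction k using Fin.lastCases with
      | last =>
        rw [hlast]
        exact leadingCoeff_ne_zero.mpr hsep.ne_zero
      | cast j =>
        obtain ⟨γ, _, h2, _⟩ := hall j
        intro hz
        unfold Setup.vK at h2
        rw [hz, map_zero, v_zero] at h2
        exact WithTop.coe_ne_top h2.symm
    have hne' : algebraMap K Kbar (f.coeff (i k)) ≠ 0 := by simpa using hne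
    obtain ⟨q, hq⟩ := v_ne_zero S hne'
    have hq' : S.vK (f.coeff (i k)) = (q : WithTop ℚ) := hq
    simp only [hc, hq']
    rfl
  have hmono : StrictMono i := by
    rw [Fin.strictMono_iff_lt_succ]
    intro j
    rw [hi1, hi2]
    have : 0 < (rootsEq S f (θ j)).card :=
      Finset.card_pos.mpr ⟨θ j, Finset.mem_filter.mpr ⟨hθm j, rfl⟩⟩
    omega
  have hcs : ∀ j : Fin W.card, c j.succ - c j.castSucc =
      ρ j * ((i j.succ : ℚ) - i j.castSucc) ∧
      ∀ m (q : ℚ), S.vK (f.coeff m) = (q : WithTop ℚ) →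
        ρ j * ((m : ℚ) - i j.castSucc) ≤ q - c j.castSucc := by
    intro j
    obtain ⟨γ, h1, h2, h3⟩ := hall j
    rw [hvert] at h2 h3
    have h2' : c j.castSucc = γ - (i j.castSucc) * (-ρ j) := by exact_mod_cast h2
    have h3' : c j.succ = γ - (i j.succ) * (-ρ j) := by exact_mod_cast h3
    constructor
    · rw [h2', h3']; ring
    · intro m q hq
      have := h1 m q hq
      rw [h2']; linarith
  have hpos : ∀ j : Fin W.card, (0 : ℚ) < (i j.succ : ℚ) - i j.castSucc := by
    intro j
    have h1 : i j.castSucc < i j.succ := hmono Fin.castSucc_lt_succ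
    rw [sub_pos]; exact_mod_cast h1
  have hslope : ∀ j, NPslope i c j = ρ j := by
    intro j
    unfold NPslope
    rw [(hcs j).1, mul_div_cancel_right₀ _ (hpos j).ne']
  refine ⟨W.card, i, c, ⟨hmono, ?_, hlast, hvert, ?_, ?_⟩, ?_⟩
  · rw [natTrailingDegree_eq_zero.mpr (Or.inr h0)]
    simp only [hi]
    rw [Finset.card_eq_zero, Finset.filter_eq_empty_iff]
    rintro r _ ⟨j, hj, _⟩
    exact Fin.not_lt_zero _ hj
  · intro j j' hjj
    rw [hslope, hslope]
    exact ρ.strictMono hjj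
  · intro j m q hq
    have := (hcs j).2 m q hq
    rw [(hcs j).1]
    have h2 := mul_le_mul_of_nonneg_right this (hpos j).le
    linarith
  · intro r hr lam hlam
    obtain ⟨t, ht⟩ := hroot r hr
    refine ⟨t, ?_⟩
    rw [hslope]
    rw [hlam] at ht
    have : lam = -ρ t := by exact_mod_cast ht
    linarith

end NP

/-- **NP-regularity via clusters.** Suppose `f(0) ≠ 0` and set `λ_s = min_{r ∈ s} v(r)` for a
cluster `s`. Then `f` is NP-regular iff every proper cluster `s ∈ Σ_f` with `|s| > |λ_s|_p`
satisfies `d_s = λ_s`. -/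
theorem npRegular_iff_clusters
    (S : Setup K Kbar) (π : K) (hπ : S.vK π = ((1 : ℚ) : WithTop ℚ))
    (p : ℕ) (hp : p.Prime) (hres : ((0 : ℚ) : WithTop ℚ) < S.vK (p : K))
    (f : K[X]) (hsep : f.Separable) (hdeg : 1 ≤ f.natDegree) (h0 : f.coeff 0 ≠ 0) :
    NPRegular S π f ↔
      ∀ s : Finset Kbar, IsCluster S f s → 1 < s.card →
        ∀ lam : ℚ, dmin S s 0 = ((lam : ℚ) : WithTop ℚ) →
          padicNorm p lam < (s.card : ℚ) → depth S s = ((lam : ℚ) : WithTop ℚ) := by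
  constructor
  · intro hreg s hs hcard lam hlam hnorm
    obtain ⟨N, i, c, h, hedge⟩ := np_exists S hsep hdeg h0
    obtain ⟨hne, z, δ, hsz⟩ := hs
    have hsub : s ⊆ rootFinset f := by rw [hsz]; exact Finset.filter_subset _ _
    have hlam' : ∀ r ∈ s, (lam : WithTop ℚ) ≤ S.v r := by
      intro r hr
      rw [← hlam]
      have := Finset.inf_le (f := fun r => S.v (r - 0)) hr
      simpa [dmin] using this
    obtain ⟨r0, hr0, hr0v⟩ := Finset.exists_mem_eq_inf s hne (fun r => S.v (r - 0))
    have hr0v' : S.v r0 = (lam : WithTop ℚ) := by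
      have h1 : dmin S s 0 = S.v (r0 - 0) := hr0v
      rw [sub_zero] at h1
      rw [← h1, hlam]
    by_contra hdep
    have hge : (lam : WithTop ℚ) ≤ depth S s := by
      apply Finset.le_inf
      intro r hr
      apply Finset.le_inf
      intro r' hr'
      exact le_trans (le_min (hlam' r hr) (hlam' r' hr')) (v_sub_ge S r r')
    have hgt : (lam : WithTop ℚ) < depth S s := lt_of_le_of_ne hge (Ne.symm hdep)
    have hclose : ∀ r ∈ s, (lam : WithTop ℚ) < S.v (r - r0) := by
      intro r hr
      apply lt_of_lt_of_le hgt
      exact le_trans (Finset.inf_le hr) (Finset.inf_le hr0)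
    obtain ⟨j, hj⟩ := hedge r0 (hsub hr0) lam hr0v'
    have hcne : f.coeff (i j.castSucc) ≠ 0 := by
      intro hz
      have := h.vert j.castSucc
      unfold Setup.vK at this
      rw [hz, map_zero, v_zero] at this
      exact WithTop.coe_ne_top this.symm
    obtain ⟨q₁, hq₁⟩ := S.v_base_int _ hcne
    have hq₁' : S.vK (f.coeff (i j.castSucc)) = ((q₁ : ℚ) : WithTop ℚ) := hq₁
    have hqc : (q₁ : ℚ) = c j.castSucc := by
      have := h.vert j.castSucc
      rw [hq₁'] at this
      exact_mod_cast this
    have hnρ : ((NPslope i c j).num : ℚ) = ((NPslope i c j).den : ℚ) * NPslope i c j := by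
      rw [mul_comm]; exact (Rat.mul_den_eq_num _).symm
    obtain ⟨θ, hθ, hθv⟩ := exists_theta S π hπ (NPslope i c j) _ (NPslope i c j).num rfl hnρ
    obtain ⟨id1, id2⟩ := np_ident S hsep h0 h j hθv
    obtain ⟨a, n', hn', han⟩ := Nat.exists_eq_pow_mul_and_not_dvd
      (NPslope i c j).den_nz p hp.one_lt.ne'
    have hsepE := hreg N i c h j q₁ _ _ hqc rfl hnρ
    rw [edge_sep S f hsep π hπ hp hres _ _ q₁ _ _ (NPslope i c j) rfl θ hθ hθv id1 id2 hq₁'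
      a n' hn' han] at hsepE
    have hθlam : S.v θ = (lam : WithTop ℚ) := by rw [hθv, hj, neg_neg]
    have hall : ∀ r ∈ s, S.v r = (lam : WithTop ℚ) := by
      intro r hr
      rw [← hr0v']
      apply v_eq_of_lt
      rw [hr0v']; exact hclose r hr
    have hdiv : ∀ r ∈ s, (0 : WithTop ℚ) ≤ S.v (r / θ) := by
      intro r hr
      rw [v_div_coe S (hall r hr) hθlam, sub_self]; rfl
    have hle : s.card ≤ p ^ a := by
      refine le_trans (Finset.card_le_card ?_) (hsepE (red S (r0 / θ)))
      intro r hr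
      rw [Finset.mem_filter]
      refine ⟨Finset.mem_filter.mpr ⟨hsub hr, by rw [hall r hr, hθlam]⟩, ?_⟩
      rw [red_eq_red S (hdiv r hr) (hdiv r0 hr0), ← sub_div]
      by_cases hz : r - r0 = 0
      · simp [hz, v_zero]
      · obtain ⟨q, hq⟩ := v_ne_zero S hz
        have h1 := hclose r hr
        rw [hq] at h1
        have h2 : lam < q := by exact_mod_cast h1
        rw [v_div_coe S hq hθlam]
        exact_mod_cast sub_pos.mpr h2
    have hden : lam.den = p ^ a * n' := by
      rw [← han, hj]; simp
    obtain ⟨_, hb⟩ := padic_bounds p hp lam a n' hn' hden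
    by_cases ha : a = 0
    · rw [ha, pow_zero] at hle
      omega
    · rw [hb ha] at hnorm
      have : p ^ a < s.card := by exact_mod_cast hnorm
      omega
  · intro hcl N i c h j q₁ nρ n hq₁ hn hnρ
    obtain ⟨θ, hθ, hθv⟩ := exists_theta S π hπ (NPslope i c j) n nρ hn hnρ
    obtain ⟨id1, id2⟩ := np_ident S hsep h0 h j hθv
    obtain ⟨a, n', hn', han⟩ := Nat.exists_eq_pow_mul_and_not_dvd
      (NPslope i c j).den_nz p hp.one_lt.ne'
    have hv : S.vK (f.coeff (i j.castSucc)) = ((q₁ : ℚ) : WithTop ℚ) := by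
      rw [hq₁]; exact h.vert _
    rw [edge_sep S f hsep π hπ hp hres _ _ q₁ _ _ (NPslope i c j) hn θ hθ hθv id1 id2 hv
      a n' hn' (hn.trans han)]
    intro w
    by_contra! hlt
    set T := (rootsEq S f θ).filter (fun r => red S (r / θ) = w) with hT
    set lam : ℚ := -NPslope i c j with hlamdef
    have hpa : 0 < p ^ a := pow_pos hp.pos _
    obtain ⟨r0, hr0, r1, hr1, hne01⟩ := Finset.one_lt_card.mp (show 1 < T.card by omega)
    have hTm : ∀ r ∈ T, r ∈ rootFinset f ∧ S.v r = (lam : WithTop ℚ) ∧ red S (r / θ) = w := by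
      intro r hr
      rw [hT, Finset.mem_filter, rootsEq, Finset.mem_filter, hθv] at hr
      exact ⟨hr.1.1, hr.1.2, hr.2⟩
    have hdiv : ∀ r ∈ T, (0 : WithTop ℚ) ≤ S.v (r / θ) := by
      intro r hr
      rw [v_div_coe S (hTm r hr).2.1 hθv, sub_self]; rfl
    have hclose : ∀ r ∈ T, (lam : WithTop ℚ) < S.v (r - r0) := by
      intro r hr
      have h1 : red S (r / θ) = red S (r0 / θ) := by rw [(hTm r hr).2.2, (hTm r0 hr0).2.2]
      rw [red_eq_red S (hdiv r hr) (hdiv r0 hr0), ← sub_div] at h1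
      by_cases hz : r - r0 = 0
      · rw [hz, v_zero]; exact WithTop.coe_lt_top _
      · obtain ⟨q, hq⟩ := v_ne_zero S hz
        rw [v_div_coe S hq hθv] at h1
        have h2 : 0 < q - lam := by exact_mod_cast h1
        rw [hq]
        exact_mod_cast sub_pos.mp h2
    obtain ⟨δ, hδ1, hδ2⟩ : ∃ δ : ℚ, lam < δ ∧ ∀ r ∈ T, (δ : WithTop ℚ) ≤ S.v (r - r0) := by
      have hm : T.inf (fun r => S.v (r - r0)) ≠ ⊤ := by
        intro htop
        have h1 := Finset.inf_le (f := fun r => S.v (r - r0)) hr1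
        rw [htop, top_le_iff] at h1
        have := (S.v_top_iff _).mp h1
        exact hne01 (sub_eq_zero.mp this).symm
      obtain ⟨δ, hδ⟩ := WithTop.ne_top_iff_exists.mp hm
      refine ⟨δ, ?_, ?_⟩
      · have h1 : (lam : WithTop ℚ) < T.inf (fun r => S.v (r - r0)) := by
          rw [Finset.lt_inf_iff (WithTop.coe_lt_top _)]
          exact hclose
        rw [← hδ] at h1
        exact_mod_cast h1
      · intro r hr
        rw [hδ]; exact Finset.inf_le hr
    have hδ1' : (lam : WithTop ℚ) < (δ : WithTop ℚ) := by exact_mod_cast hδ1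
    set s := (rootFinset f).filter fun r => ((δ : ℚ) : WithTop ℚ) ≤ S.v (r - r0) with hs
    have hTs : T ⊆ s := fun r hr => Finset.mem_filter.mpr ⟨(hTm r hr).1, hδ2 r hr⟩
    have hcard : T.card ≤ s.card := Finset.card_le_card hTs
    have hsv : ∀ r ∈ s, S.v r = (lam : WithTop ℚ) := by
      intro r hr
      rw [← (hTm r0 hr0).2.1]
      apply v_eq_of_lt
      rw [(hTm r0 hr0).2.1]
      exact lt_of_lt_of_le hδ1' (Finset.mem_filter.mp hr).2
    have hdmin : dmin S s 0 = (lam : WithTop ℚ) := by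
      apply le_antisymm
      · have h1 := Finset.inf_le (f := fun r => S.v (r - 0)) (hTs hr0)
        rw [sub_zero, hsv r0 (hTs hr0)] at h1
        exact h1
      · apply Finset.le_inf
        intro r hr
        rw [sub_zero, hsv r hr]
    have hden : lam.den = p ^ a * n' := by
      rw [← han, hlamdef]; simp
    have hnorm : padicNorm p lam < (s.card : ℚ) := by
      refine lt_of_le_of_lt (padic_bounds p hp lam a n' hn' hden).1 ?_
      exact_mod_cast lt_of_lt_of_le hlt hcard
    have hd := hcl s ⟨⟨r0, hTs hr0⟩, r0, δ, hs⟩ (by omega) lam hdmin hnorm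
    have hd2 : (δ : WithTop ℚ) ≤ depth S s := by
      apply Finset.le_inf
      intro r hr
      apply Finset.le_inf
      intro r' hr'
      have h1 := v_sub_ge S (r - r0) (r' - r0)
      rw [sub_sub_sub_cancel_right] at h1
      exact le_trans (le_min (Finset.mem_filter.mp hr).2 (Finset.mem_filter.mp hr').2) h1
    rw [hd] at hd2
    exact absurd hδ1' (not_lt.mpr hd2)

end ClusterPicture
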